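/- arXiv:1605.02618 — 2 statements merged into one kernel-verified Lean document; each statement's English description precedes it below -/
import Mathlib

section
/- For all integers n ≥ 1 and k ≥ 0 one has (in ℤ): T(n,k) = (1+k)·T(n−1,k) + (n−2k+1)·T(n−1,k−1) + k·D(n−1,k) + (n−2k+2)·D(n−1,k−1) + T⁻(n−1,k−1), where terms with second argument −1 vanish. -/
/-!
Every signed permutation of rank `N + 1` arises exactly once by inserting the letter `±(N + 1)`
into one of the `N + 1` gaps of the word of a signed permutation `π` of rank `N`
(`ins_bijective`). The result is simsun iff `π` is simsun and the new word has no double descent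
(`isSimsun_ins`).

Let `d` be the descent indicator of `π` (`Dsc`), `k = des_B π`, and insert right after `π(p)`.
* The letter `N + 1` creates no double descent iff `p + 1` is not a descent, and it keeps the
  descent number if `p` is a descent or `p = N`, raising it by one otherwise. Since `d` has no two
  consecutive ones, `(1 - d p) (1 - d (p+1)) = 1 - d p - d (p+1)`; summation over `p` gives `k + 1`
  insertions keeping `k` and `N - 2k + d 0` raising it.
* The letter `-(N + 1)` creates no double descent iff `p - 1` is not a descent, and it keeps the
  descent number iff `p` is a descent. This gives `k` insertions keeping `k` and `N + 1 - 2k`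
  raising it.

A permutation with an odd number of signs comes from an odd one by inserting `N + 1`, or from an
even one by inserting `-(N + 1)`; `d 0 = 1` says that `π(1) < 0`. Summing over `π` gives the
recurrence.
-/

open Finset

/-- A signed permutation of rank `n`, encoded as an (unsigned) permutation of
`Fin n` together with a choice of sign for each position: the entry
`π(i+1)` of the word is `±(σ(i)+1)` where the sign is `-` iff `sgn i = true`. -/
abbrev SignedPerm (n : ℕ) := Equiv.Perm (Fin n) × (Fin n → Bool)

/-- The entry `π(j+1)` of the word of a signed permutation. -/
def entry {n : ℕ} (π : SignedPerm n) (j : Fin n) : ℤ :=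
  (if π.2 j then -1 else 1) * (((π.1 j : ℕ) : ℤ) + 1)

/-- The word `π(0)π(1)⋯π(n)` of a signed permutation (with the leading `0`). -/
def word {n : ℕ} (π : SignedPerm n) : List ℤ :=
  0 :: List.ofFn (entry π)

/-- `π(i)` for `0 ≤ i ≤ n` (and `0` outside this range). -/
def wordFn {n : ℕ} (π : SignedPerm n) (i : ℕ) : ℤ :=
  if h : 1 ≤ i ∧ i ≤ n then entry π ⟨i - 1, by omega⟩ else 0

/-- A word has no double descent: no three consecutive strictly decreasing entries. -/
def noDD : List ℤ → Bool
  | a :: b :: c :: rest => (!(decide (b < a) && decide (c < b))) && noDD (b :: c :: rest)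
  | _ => true

/-- A signed permutation is simsun if for every `0 ≤ k ≤ n`, deleting the entries
`±n, …, ±(n-k+1)` (i.e. keeping the entries of absolute value `≤ m := n - k`) from the
word `π(0)π(1)⋯π(n)` leaves a word with no three consecutive strictly decreasing
entries. -/
def IsSimsun {n : ℕ} (π : SignedPerm n) : Prop :=
  ∀ m ≤ n, noDD ((word π).filter (fun a => a.natAbs ≤ m)) = true

instance {n : ℕ} : DecidablePred (IsSimsun (n := n)) := fun _ => by
  unfold IsSimsun; infer_instance

/-- The type-B descent number `des_B(π) = #{0 ≤ i ≤ n-1 : π(i) > π(i+1)}`. -/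
def desB {n : ℕ} (π : SignedPerm n) : ℕ :=
  ((Finset.range n).filter (fun i => wordFn π (i + 1) < wordFn π i)).card

/-- The set of signed simsun permutations of rank `n`. -/
def RB (n : ℕ) : Finset (SignedPerm n) := univ.filter IsSimsun

/-- Signed simsun permutations with `π(1) > 0` (for `n = 0`, the empty permutation
is included, following the convention `R⁺_0 = 1`). -/
def RBp (n : ℕ) : Finset (SignedPerm n) :=
  (RB n).filter (fun π => 0 < wordFn π 1 ∨ n = 0)

/-- Signed simsun permutations with `π(1) < 0`. -/
def RBm (n : ℕ) : Finset (SignedPerm n) :=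
  (RB n).filter (fun π => wordFn π 1 < 0)

/-- A signed permutation is even-signed if its word has an even number of negative entries. -/
def IsEvenSigned {n : ℕ} (π : SignedPerm n) : Prop :=
  (univ.filter (fun j => π.2 j = true)).card % 2 = 0

instance {n : ℕ} : DecidablePred (IsEvenSigned (n := n)) := fun _ => by
  unfold IsEvenSigned; infer_instance

def RD (n : ℕ) : Finset (SignedPerm n) := (RB n).filter IsEvenSigned
def RT (n : ℕ) : Finset (SignedPerm n) := (RB n).filter (fun π => ¬ IsEvenSigned π)
def RDp (n : ℕ) : Finset (SignedPerm n) := (RD n).filter (fun π => 0 < wordFn π 1 ∨ n = 0)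
def RDm (n : ℕ) : Finset (SignedPerm n) := (RD n).filter (fun π => wordFn π 1 < 0)
def RTp (n : ℕ) : Finset (SignedPerm n) := (RT n).filter (fun π => 0 < wordFn π 1 ∨ n = 0)
def RTm (n : ℕ) : Finset (SignedPerm n) := (RT n).filter (fun π => wordFn π 1 < 0)

/-- `R(n,k)`, as an integer, vanishing for `k < 0`. -/
def Rcnt (n : ℕ) (k : ℤ) : ℤ := ((RB n).filter (fun π => (desB π : ℤ) = k)).card
def Rpcnt (n : ℕ) (k : ℤ) : ℤ := ((RBp n).filter (fun π => (desB π : ℤ) = k)).card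
def Rmcnt (n : ℕ) (k : ℤ) : ℤ := ((RBm n).filter (fun π => (desB π : ℤ) = k)).card
def Dcnt (n : ℕ) (k : ℤ) : ℤ := ((RD n).filter (fun π => (desB π : ℤ) = k)).card
def Tcnt (n : ℕ) (k : ℤ) : ℤ := ((RT n).filter (fun π => (desB π : ℤ) = k)).card
def Dpcnt (n : ℕ) (k : ℤ) : ℤ := ((RDp n).filter (fun π => (desB π : ℤ) = k)).card
def Dmcnt (n : ℕ) (k : ℤ) : ℤ := ((RDm n).filter (fun π => (desB π : ℤ) = k)).card
def Tpcnt (n : ℕ) (k : ℤ) : ℤ := ((RTp n).filter (fun π => (desB π : ℤ) = k)).card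
def Tmcnt (n : ℕ) (k : ℤ) : ℤ := ((RTm n).filter (fun π => (desB π : ℤ) = k)).card

/-! ### Inserting the largest letter -/

/-- Insertion of the letter `N + 1` (negated iff `s`) right after `π(p)` in the word of `π`. -/
def ins {N : ℕ} (π : SignedPerm N) (p : Fin (N + 1)) (s : Bool) : SignedPerm (N + 1) :=
  ((finSuccEquiv' p).trans ((Equiv.optionCongr π.1).trans (finSuccEquiv' (Fin.last N)).symm),
    Fin.insertNth (α := fun _ => Bool) p s π.2)

lemma ins_fst_at {N : ℕ} (π : SignedPerm N) (p : Fin (N + 1)) (s : Bool) :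
    (ins π p s).1 p = Fin.last N := by
  simp [ins]

lemma ins_fst_succAbove {N : ℕ} (π : SignedPerm N) (p : Fin (N + 1)) (s : Bool) (j : Fin N) :
    (ins π p s).1 (p.succAbove j) = (π.1 j).castSucc := by
  simp [ins]

lemma ins_snd_at {N : ℕ} (π : SignedPerm N) (p : Fin (N + 1)) (s : Bool) :
    (ins π p s).2 p = s := by
  simp [ins]

lemma ins_snd_succAbove {N : ℕ} (π : SignedPerm N) (p : Fin (N + 1)) (s : Bool) (j : Fin N) :
    (ins π p s).2 (p.succAbove j) = π.2 j := by
  simp [ins]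

lemma entry_ins_at {N : ℕ} (π : SignedPerm N) (p : Fin (N + 1)) (s : Bool) :
    entry (ins π p s) p = (if s then -1 else 1) * ((N : ℤ) + 1) := by
  simp [entry, ins_fst_at, ins_snd_at]

lemma entry_ins_succAbove {N : ℕ} (π : SignedPerm N) (p : Fin (N + 1)) (s : Bool) (j : Fin N) :
    entry (ins π p s) (p.succAbove j) = entry π j := by
  simp [entry, ins_fst_succAbove, ins_snd_succAbove]

/-- Each signed permutation of rank `N + 1` is obtained by exactly one insertion. -/
lemma ins_bijective (N : ℕ) : Function.Bijective
    (fun x : SignedPerm N × Fin (N + 1) × Bool => ins x.1 x.2.1 x.2.2) := by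
  rw [Fintype.bijective_iff_injective_and_card]
  constructor
  · rintro ⟨π, p, s⟩ ⟨π', p', s'⟩ h
    simp only at h
    have hp : p = p' := by
      apply (ins π' p' s').1.injective
      rw [ins_fst_at, ← h, ins_fst_at]
    subst hp
    have hs : s = s' := by
      rw [← ins_snd_at π p s, h, ins_snd_at]
    subst hs
    have h1 : π.1 = π'.1 := by
      ext j
      have := ins_fst_succAbove π p s j
      rw [h, ins_fst_succAbove] at this
      exact congrArg Fin.val (Fin.castSucc_injective _ this.symm)
    have h2 : π.2 = π'.2 := by
      funext j
      rw [← ins_snd_succAbove π p s j, h, ins_snd_succAbove]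
    rw [Prod.ext h1 h2]
  · simp [Fintype.card_perm, Nat.factorial_succ, pow_succ]
    ring

lemma isEvenSigned_ins {N : ℕ} (π : SignedPerm N) (p : Fin (N + 1)) (s : Bool) :
    IsEvenSigned (ins π p s) ↔ (IsEvenSigned π ↔ s = false) := by
  unfold IsEvenSigned
  rw [Finset.card_filter, Finset.card_filter, Fin.sum_univ_succAbove _ p]
  simp only [ins_snd_at, ins_snd_succAbove]
  cases s <;> simp <;> omega

/-! ### The word, its descents and its double descents -/

/-- `i` is a descent of the word of `π`; false for `i ≥ n`. -/
def Dsc {n : ℕ} (π : SignedPerm n) (i : ℕ) : Prop := i < n ∧ wordFn π (i + 1) < wordFn π i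

instance {n : ℕ} (π : SignedPerm n) (i : ℕ) : Decidable (Dsc π i) := by
  unfold Dsc; infer_instance

lemma entry_bound {n : ℕ} (π : SignedPerm n) (j : Fin n) :
    -(n : ℤ) ≤ entry π j ∧ entry π j ≤ n := by
  have := (π.1 j).isLt
  unfold entry
  split_ifs <;> omega

lemma wordFn_bound {n : ℕ} (π : SignedPerm n) (i : ℕ) :
    -(n : ℤ) ≤ wordFn π i ∧ wordFn π i ≤ n := by
  unfold wordFn
  split_ifs
  · exact entry_bound _ _
  · omega

lemma wordFn_succ {n : ℕ} (π : SignedPerm n) (j : Fin n) : wordFn π (j + 1) = entry π j := by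
  unfold wordFn
  rw [dif_pos (by omega)]
  rfl

lemma wordFn_zero {n : ℕ} (π : SignedPerm n) : wordFn π 0 = 0 := by
  simp [wordFn]

/-- The word is unchanged up to the insertion point. -/
lemma wordFn_ins_le {N : ℕ} (π : SignedPerm N) (p : Fin (N + 1)) (s : Bool) {i : ℕ}
    (h : i ≤ p) : wordFn (ins π p s) i = wordFn π i := by
  rcases i with _ | i
  · simp [wordFn_zero]
  · have hi : i < N := by omega
    have h1 := wordFn_succ (ins π p s) (p.succAbove ⟨i, hi⟩)
    rw [entry_ins_succAbove, ← wordFn_succ π ⟨i, hi⟩,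
      Fin.succAbove_of_castSucc_lt _ _ (by simp [Fin.lt_def]; omega)] at h1
    exact h1

lemma wordFn_ins_eq {N : ℕ} (π : SignedPerm N) (p : Fin (N + 1)) (s : Bool) :
    wordFn (ins π p s) (p + 1) = (if s then -1 else 1) * ((N : ℤ) + 1) := by
  rw [wordFn_succ, entry_ins_at]

/-- The word is shifted by one after the insertion point. -/
lemma wordFn_ins_gt {N : ℕ} (π : SignedPerm N) (p : Fin (N + 1)) (s : Bool) {i : ℕ}
    (h : p < i) (hi : i ≤ N) : wordFn (ins π p s) (i + 1) = wordFn π i := by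
  obtain ⟨i, rfl⟩ : ∃ m, i = m + 1 := ⟨i - 1, by omega⟩
  have hi : i < N := by omega
  have h1 := wordFn_succ (ins π p s) (p.succAbove ⟨i, hi⟩)
  rw [entry_ins_succAbove, ← wordFn_succ π ⟨i, hi⟩,
    Fin.succAbove_of_le_castSucc _ _ (by simp [Fin.le_def]; omega)] at h1
  exact h1

lemma dsc_ins_lt {N : ℕ} (π : SignedPerm N) (p : Fin (N + 1)) (s : Bool) {i : ℕ}
    (h : i < p) : Dsc (ins π p s) i ↔ Dsc π i := by
  unfold Dsc
  rw [wordFn_ins_le π p s (i := i) (by omega), wordFn_ins_le π p s (i := i + 1) (by omega)]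
  constructor <;> rintro ⟨_, h2⟩ <;> exact ⟨by omega, h2⟩

lemma dsc_ins_at {N : ℕ} (π : SignedPerm N) (p : Fin (N + 1)) (s : Bool) :
    Dsc (ins π p s) p ↔ s = true := by
  unfold Dsc
  rw [wordFn_ins_le π p s le_rfl, wordFn_ins_eq]
  have := wordFn_bound π p
  cases s <;> simp <;> omega

lemma dsc_ins_succ {N : ℕ} (π : SignedPerm N) (p : Fin (N + 1)) (s : Bool) :
    Dsc (ins π p s) (p + 1) ↔ (p : ℕ) < N ∧ s = false := by
  unfold Dsc
  by_cases hp : (p : ℕ) < N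
  · rw [wordFn_ins_gt π p s (i := p + 1) (by omega) (by omega), wordFn_ins_eq]
    have := wordFn_bound π (p + 1)
    cases s <;> simp <;> omega
  · simp [hp]

lemma dsc_ins_gt {N : ℕ} (π : SignedPerm N) (p : Fin (N + 1)) (s : Bool) {i : ℕ}
    (h : p < i) : Dsc (ins π p s) (i + 1) ↔ Dsc π i := by
  unfold Dsc
  by_cases hi : i < N
  · rw [wordFn_ins_gt π p s (i := i) (by omega) (by omega),
      wordFn_ins_gt π p s (i := i + 1) (by omega) (by omega)]
    simp [hi]
  · simp [hi]

lemma desB_eq_sum {n : ℕ} (π : SignedPerm n) :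
    desB π = ∑ i : Fin n, if Dsc π i then 1 else 0 := by
  unfold desB
  rw [Finset.card_filter, Finset.sum_range]
  refine Finset.sum_congr rfl fun i _ => ?_
  simp [Dsc]

lemma desB_eq_sum_range {N : ℕ} (π : SignedPerm N) :
    (desB π : ℤ) = ∑ i ∈ range N, if Dsc π i then 1 else 0 := by
  rw [desB_eq_sum, Finset.sum_range]
  push_cast
  rfl

/-- The new letter makes gap `p` contribute one descent in total (none if `N + 1` is placed at
the end of the word); the other gaps are unaffected. -/
lemma desB_ins {N : ℕ} (π : SignedPerm N) (p : Fin (N + 1)) (s : Bool) :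
    desB (ins π p s) =
      desB π + if Dsc π p ∨ ((p : ℕ) = N ∧ s = false) then 0 else 1 := by
  have key : desB (ins π p s) = (if s = true then 1 else 0) +
      ∑ j : Fin N, (if (j : ℕ) = p then (if s = false then 1 else 0)
        else if Dsc π j then 1 else 0) := by
    rw [desB_eq_sum, Fin.sum_univ_succAbove _ p]
    simp only [dsc_ins_at]
    congr 1
    refine Finset.sum_congr rfl fun j _ => ?_
    rcases lt_trichotomy (j : ℕ) p with h | h | h
    · rw [Fin.succAbove_of_castSucc_lt _ _ (by simpa [Fin.lt_def] using h), if_neg h.ne]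
      simp only [Fin.val_castSucc, dsc_ins_lt π p s h]
    · rw [Fin.succAbove_of_le_castSucc _ _ (by simp [Fin.le_def, h]), if_pos h]
      simp only [Fin.val_succ, h, dsc_ins_succ]
      have : (p : ℕ) < N := h ▸ j.isLt
      simp [this]
    · rw [Fin.succAbove_of_le_castSucc _ _ (by simpa [Fin.le_def] using h.le), if_neg h.ne']
      simp only [Fin.val_succ, dsc_ins_gt π p s h]
  rw [key, desB_eq_sum]
  by_cases hp : (p : ℕ) < N
  · rw [← Finset.add_sum_erase univ _ (mem_univ (⟨p, hp⟩ : Fin N)),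
      ← Finset.add_sum_erase univ (fun i : Fin N => if Dsc π i then 1 else 0)
        (mem_univ (⟨p, hp⟩ : Fin N))]
    have : ∀ j ∈ univ.erase (⟨p, hp⟩ : Fin N),
        (if (j : ℕ) = p then (if s = false then 1 else 0) else if Dsc π j then 1 else 0)
          = if Dsc π j then 1 else 0 := by
      intro j hj
      rw [if_neg]
      intro h
      exact (Finset.mem_erase.1 hj).1 (Fin.ext h)
    rw [Finset.sum_congr rfl this]
    have hne : (p : ℕ) ≠ N := hp.ne
    by_cases hd : Dsc π p <;> cases s <;> simp [hd, hne] <;> omega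
  · have hpN : (p : ℕ) = N := by omega
    have hd : ¬ Dsc π p := fun h => hp h.1
    have : ∀ j : Fin N,
        (if (j : ℕ) = p then (if s = false then 1 else 0) else if Dsc π j then 1 else 0)
          = if Dsc π j then 1 else 0 := by
      intro j
      rw [if_neg (by omega)]
    rw [Finset.sum_congr rfl fun j _ => this j]
    cases s
    · simp [hpN]
    · have hcond : ¬ (Dsc π p ∨ ((p : ℕ) = N ∧ true = false)) := by simpa using hd
      rw [if_neg hcond]
      simp [add_comm]

lemma noDD_iff (L : List ℤ) : noDD L = true ↔
    ∀ i (h : i + 2 < L.length), ¬ (L[i + 1] < L[i] ∧ L[i + 2] < L[i + 1]) := by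
  induction L with
  | nil => simp [noDD]
  | cons a L ih =>
    match L, ih with
    | [], _ => simp [noDD]
    | [b], _ => simp [noDD]
    | b :: c :: L, ih =>
      simp only [noDD, Bool.and_eq_true, ih]
      constructor
      · rintro ⟨h1, h2⟩ i hi
        rcases i with _ | i
        · simpa [imp_iff_not_or] using h1
        · exact h2 i (by simpa using hi)
      · intro h
        refine ⟨by simpa [imp_iff_not_or] using h 0 (by simp), fun i hi => ?_⟩
        exact h (i + 1) (by simpa using hi)

lemma length_word {n : ℕ} (π : SignedPerm n) : (word π).length = n + 1 := by
  simp [word]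

lemma getElem_word {n : ℕ} (π : SignedPerm n) (i : ℕ) (h : i < (word π).length) :
    (word π)[i] = wordFn π i := by
  rw [length_word] at h
  rcases i with _ | i
  · simp [word, wordFn_zero]
  · rw [wordFn_succ π ⟨i, by omega⟩]
    simp [word]

lemma noDD_word {n : ℕ} (π : SignedPerm n) :
    noDD (word π) = true ↔ ∀ i, ¬ (Dsc π i ∧ Dsc π (i + 1)) := by
  simp only [noDD_iff, getElem_word, length_word, Dsc]
  constructor
  · rintro h i ⟨⟨h1, h2⟩, h3, h4⟩
    exact h i (by omega) ⟨h2, h4⟩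
  · rintro h i hi ⟨h1, h2⟩
    exact h i ⟨⟨by omega, h1⟩, by omega, h2⟩

/-- Inserting after `π(p)` creates a double descent iff `N + 1` is followed by a descent, or
`-(N + 1)` is preceded by one. -/
lemma noDD_word_ins {N : ℕ} (π : SignedPerm N) (p : Fin (N + 1)) (s : Bool)
    (hπ : noDD (word π) = true) :
    noDD (word (ins π p s)) = true ↔
      if s then ∀ q, q + 1 = (p : ℕ) → ¬ Dsc π q else ¬ Dsc π (p + 1) := by
  rw [noDD_word] at *
  have hat := dsc_ins_at π p s
  have hsucc := dsc_ins_succ π p s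
  constructor
  · intro h
    cases s
    · simp only [Bool.false_eq_true, if_false]
      intro hd
      refine h (p + 1) ⟨hsucc.2 ⟨by have := hd.1; omega, rfl⟩, ?_⟩
      exact (dsc_ins_gt π p false (i := p + 1) (by omega)).2 hd
    · simp only [if_true]
      intro q hq hd
      refine h q ⟨(dsc_ins_lt π p true (by omega)).2 hd, ?_⟩
      rw [hq]
      exact hat.2 rfl
  · rintro h i ⟨h1, h2⟩
    rcases lt_trichotomy (i + 1) p with hi | hi | hi
    · rw [dsc_ins_lt π p s (by omega)] at h1
      rw [dsc_ins_lt π p s hi] at h2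
      exact hπ i ⟨h1, h2⟩
    · rw [dsc_ins_lt π p s (by omega)] at h1
      rw [hi, hat] at h2
      subst h2
      simp only [if_true] at h
      exact h i hi h1
    · rcases Nat.lt_or_ge i (p + 1) with hi' | hi'
      · obtain rfl : i = p := by omega
        rw [hat] at h1
        rw [hsucc] at h2
        simp [h1] at h2
      · obtain ⟨m, rfl⟩ : ∃ m, i = m + 1 := ⟨i - 1, by omega⟩
        rw [dsc_ins_gt π p s (by omega)] at h2
        rcases Nat.lt_or_ge (p : ℕ) m with hm | hm
        · rw [dsc_ins_gt π p s hm] at h1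
          exact hπ m ⟨h1, h2⟩
        · obtain rfl : m = p := by omega
          rw [hsucc] at h1
          rw [h1.2] at h
          simp only [Bool.false_eq_true, if_false] at h
          exact h h2

/-- Removing one entry that fails the predicate does not change the filtered list. -/
lemma filter_ofFn_succAbove (P : ℤ → Bool) : ∀ {N : ℕ} (g : Fin (N + 1) → ℤ) (p : Fin (N + 1)),
    P (g p) = false →
      (List.ofFn g).filter P = (List.ofFn fun j => g (p.succAbove j)).filter P := by
  intro N
  induction N with
  | zero =>
    intro g p h
    obtain rfl : p = 0 := Fin.fin_one_eq_zero p
    simp [List.ofFn_succ, h]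
  | succ N ih =>
    intro g p h
    induction p using Fin.cases with
    | zero => simp [List.filter_cons, h]
    | succ q =>
      rw [List.ofFn_succ (f := g), List.ofFn_succ (f := fun j => g (q.succ.succAbove j)),
        List.filter_cons, List.filter_cons, ih (fun i => g i.succ) q h]
      simp

lemma isSimsun_ins {N : ℕ} (π : SignedPerm N) (p : Fin (N + 1)) (s : Bool) :
    IsSimsun (ins π p s) ↔ IsSimsun π ∧ noDD (word (ins π p s)) = true := by
  have hsmall : ∀ m ≤ N, (word (ins π p s)).filter (fun a => a.natAbs ≤ m) =
      (word π).filter (fun a => a.natAbs ≤ m) := by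
    intro m hm
    unfold word
    rw [List.filter_cons, List.filter_cons,
      filter_ofFn_succAbove _ (entry (ins π p s)) p (by
        rw [entry_ins_at]
        cases s <;> simp <;> omega)]
    simp only [entry_ins_succAbove]
  have hfull : (word (ins π p s)).filter (fun a => a.natAbs ≤ N + 1) = word (ins π p s) := by
    rw [List.filter_eq_self]
    intro a ha
    simp only [word, List.mem_cons, List.mem_ofFn] at ha
    rcases ha with rfl | ⟨j, rfl⟩
    · simp
    · have := entry_bound (ins π p s) j
      simp only [decide_eq_true_eq]
      omega
  constructor
  · intro h
    exact ⟨fun m hm => by rw [← hsmall m hm]; exact h m (by omega),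
      by rw [← hfull]; exact h (N + 1) le_rfl⟩
  · rintro ⟨h1, h2⟩ m hm
    rcases Nat.lt_or_ge N m with h | h
    · obtain rfl : m = N + 1 := by omega
      rw [hfull]
      exact h2
    · rw [hsmall m h]
      exact h1 m h

lemma IsSimsun.noDD_word {N : ℕ} {π : SignedPerm N} (h : IsSimsun π) : noDD (word π) = true := by
  have := h N le_rfl
  rwa [List.filter_eq_self.2] at this
  intro a ha
  simp only [word, List.mem_cons, List.mem_ofFn] at ha
  rcases ha with rfl | ⟨j, rfl⟩
  · simp
  · have := entry_bound π j
    simp only [decide_eq_true_eq]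
    omega

/-! ### Counting the admissible insertions -/

lemma not_dsc_self {N : ℕ} (π : SignedPerm N) : ¬ Dsc π N := fun h => lt_irrefl _ h.1

/-- Insertions of `N + 1`: `1 + des π` keep the descent number and
`N - 2 des π + [π(1) < 0]` raise it by one. -/
lemma count_pos {N : ℕ} (π : SignedPerm N) (hπ : IsSimsun π) (k : ℤ) :
    (∑ p : Fin (N + 1), if IsSimsun (ins π p false) ∧ (desB (ins π p false) : ℤ) = k
      then (1 : ℤ) else 0) =
    (if (desB π : ℤ) = k then 1 + k else 0) +
      (if (desB π : ℤ) = k - 1 then (N : ℤ) - 2 * (k - 1) + (if Dsc π 0 then 1 else 0) else 0) := by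
  have hnd := (_root_.noDD_word π).1 hπ.noDD_word
  have hN := not_dsc_self π
  obtain ⟨F, hF⟩ : ∃ F : ℕ → ℤ, F = fun p =>
      (if (desB π : ℤ) = k then (if Dsc π p then 1 else 0) + (if p = N then 1 else 0) else 0) +
        (if (desB π : ℤ) = k - 1 then
          (if p = N then 0 else 1 - (if Dsc π p then 1 else 0) - (if Dsc π (p + 1) then 1 else 0))
          else 0) := ⟨_, rfl⟩
  have hterm : ∀ p : Fin (N + 1),
      (if IsSimsun (ins π p false) ∧ (desB (ins π p false) : ℤ) = k then (1 : ℤ) else 0) =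
        F p := by
    intro p
    rw [hF]
    have h1 := hnd p
    have h2 : (p : ℕ) = N → ¬ Dsc π p := fun h => by rwa [h]
    have h3 : (p : ℕ) = N → ¬ Dsc π (p + 1) := fun h hd => by have := hd.1; omega
    simp only [isSimsun_ins, noDD_word_ins _ _ _ hπ.noDD_word, desB_ins, hπ, true_and, and_true,
      Bool.false_eq_true, if_false]
    by_cases a : Dsc π p <;> by_cases b : Dsc π (p + 1) <;> by_cases c : (p : ℕ) = N <;>
      by_cases e : (desB π : ℤ) = k <;> by_cases f : (desB π : ℤ) = k - 1 <;>
      simp_all <;> omega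
  rw [Finset.sum_congr rfl fun p _ => hterm p, ← Finset.sum_range F, hF,
    Finset.sum_range_succ, Finset.sum_congr rfl (g := fun p : ℕ =>
      (if (desB π : ℤ) = k then (if Dsc π p then 1 else 0) else 0) +
        (if (desB π : ℤ) = k - 1 then
          (1 - (if Dsc π p then 1 else 0) - (if Dsc π (p + 1) then 1 else 0)) else 0))
    (fun p hp => by simp [(Finset.mem_range.1 hp).ne])]
  have hs := desB_eq_sum_range π
  have hs' : (∑ p ∈ range N, if Dsc π (p + 1) then (1 : ℤ) else 0) + (if Dsc π 0 then 1 else 0)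
      = desB π := by
    rw [← Finset.sum_range_succ' (fun p => if Dsc π p then (1 : ℤ) else 0), Finset.sum_range_succ,
      ← hs]
    simp [hN]
  by_cases e : (desB π : ℤ) = k
  · have f : ¬ (desB π : ℤ) = k - 1 := by omega
    simp only [if_pos e, if_neg f, hN, if_false, if_true, add_zero, zero_add]
    rw [← hs, e, add_comm]
  · by_cases f : (desB π : ℤ) = k - 1
    · simp only [if_neg e, if_pos f, if_true, zero_add, add_zero, Finset.sum_sub_distrib]
      rw [← hs, Finset.sum_const, Finset.card_range, nsmul_eq_mul, mul_one]
      linarith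
    · simp [e, f]

/-- Insertions of `-(N + 1)`: `des π` keep the descent number and `N + 1 - 2 des π` raise it
by one. -/
lemma count_neg {N : ℕ} (π : SignedPerm N) (hπ : IsSimsun π) (k : ℤ) :
    (∑ p : Fin (N + 1), if IsSimsun (ins π p true) ∧ (desB (ins π p true) : ℤ) = k
      then (1 : ℤ) else 0) =
    (if (desB π : ℤ) = k then k else 0) +
      (if (desB π : ℤ) = k - 1 then (N : ℤ) + 1 - 2 * (k - 1) else 0) := by
  have hnd := (_root_.noDD_word π).1 hπ.noDD_word
  have hN := not_dsc_self π
  classical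
  -- `prev p` is the indicator of a descent just before position `p`
  set prev : ℕ → ℤ := fun p => if ∃ q, q + 1 = p ∧ Dsc π q then 1 else 0 with hprev
  have hprev0 : prev 0 = 0 := by simp [hprev]
  have hprevS : ∀ q, prev (q + 1) = if Dsc π q then 1 else 0 := by
    intro q
    simp [hprev]
  obtain ⟨F, hF⟩ : ∃ F : ℕ → ℤ, F = fun p =>
      (if (desB π : ℤ) = k then (if Dsc π p then 1 else 0) else 0) +
        (if (desB π : ℤ) = k - 1 then 1 - (if Dsc π p then 1 else 0) - prev p else 0) := ⟨_, rfl⟩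
  have hterm : ∀ p : Fin (N + 1),
      (if IsSimsun (ins π p true) ∧ (desB (ins π p true) : ℤ) = k then (1 : ℤ) else 0) = F p := by
    intro p
    rw [hF]
    have h1 : (∃ q, q + 1 = (p : ℕ) ∧ Dsc π q) → ¬ Dsc π p := by
      rintro ⟨q, hq, hd⟩ hd'
      exact hnd q ⟨hd, hq ▸ hd'⟩
    have h2 : (∀ q, q + 1 = (p : ℕ) → ¬ Dsc π q) ↔ ¬ ∃ q, q + 1 = (p : ℕ) ∧ Dsc π q := by
      push Not
      rfl
    simp only [isSimsun_ins, noDD_word_ins _ _ _ hπ.noDD_word, desB_ins, hπ, true_and,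
      if_true, h2, hprev, Bool.true_eq_false, and_false, or_false]
    generalize (∃ q, q + 1 = (p : ℕ) ∧ Dsc π q) = Q at *
    by_cases a : Dsc π p <;> by_cases b : Q <;>
      by_cases e : (desB π : ℤ) = k <;> by_cases f : (desB π : ℤ) = k - 1 <;>
      simp_all <;> omega
  rw [Finset.sum_congr rfl fun p _ => hterm p, ← Finset.sum_range F, hF,
    Finset.sum_add_distrib]
  have hs : (∑ p ∈ range (N + 1), if Dsc π p then (1 : ℤ) else 0) = desB π := by
    rw [Finset.sum_range_succ, desB_eq_sum_range]
    simp [hN]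
  have hs' : (∑ p ∈ range (N + 1), prev p) = desB π := by
    rw [Finset.sum_range_succ', hprev0, desB_eq_sum_range]
    simp only [hprevS, add_zero]
  by_cases e : (desB π : ℤ) = k
  · have f : ¬ (desB π : ℤ) = k - 1 := by omega
    simp only [if_pos e, if_neg f, hs]
    simp [e]
  · by_cases f : (desB π : ℤ) = k - 1
    · simp only [if_neg e, if_pos f, Finset.sum_sub_distrib, hs, hs']
      simp
      linarith
    · simp [e, f]

/-- For all integers `n ≥ 1`, `k ≥ 0`:
`T(n,k) = (1+k)·T(n−1,k) + (n−2k+1)·T(n−1,k−1) + k·D(n−1,k) + (n−2k+2)·D(n−1,k−1) + T⁻(n−1,k−1)`. -/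
theorem stmt12 (n : ℕ) (hn : 1 ≤ n) (k : ℤ) (hk : 0 ≤ k) :
    Tcnt n k =
      (1 + k) * Tcnt (n - 1) k + ((n : ℤ) - 2 * k + 1) * Tcnt (n - 1) (k - 1) +
        k * Dcnt (n - 1) k + ((n : ℤ) - 2 * k + 2) * Dcnt (n - 1) (k - 1) +
          Tmcnt (n - 1) (k - 1) := by
  obtain ⟨N, rfl⟩ : ∃ N, n = N + 1 := ⟨n - 1, by omega⟩
  have hneg : ∀ π : SignedPerm N, wordFn π 1 < 0 ↔ Dsc π 0 := by
    intro π
    unfold Dsc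
    rw [wordFn_zero]
    refine ⟨fun h => ⟨?_, h⟩, fun h => h.2⟩
    by_contra h0
    rw [wordFn, dif_neg (by omega)] at h
    exact lt_irrefl _ h
  have hL : Tcnt (N + 1) k = ∑ π : SignedPerm N, ∑ p : Fin (N + 1), ∑ s : Bool,
      if IsSimsun (ins π p s) ∧ ¬ IsEvenSigned (ins π p s) ∧ (desB (ins π p s) : ℤ) = k
        then (1 : ℤ) else 0 := by
    simp only [← Fintype.sum_prod_type']
    rw [Fintype.sum_bijective _ (ins_bijective N) _
      (fun ρ : SignedPerm (N + 1) => if IsSimsun ρ ∧ ¬ IsEvenSigned ρ ∧ (desB ρ : ℤ) = k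
        then (1 : ℤ) else 0) (fun x => rfl)]
    simp [Tcnt, RT, RB, Finset.filter_filter, and_assoc]
  have hcard : ∀ (P : SignedPerm N → Prop) [DecidablePred P],
      ((univ.filter P).card : ℤ) = ∑ π : SignedPerm N, if P π then 1 else 0 := by
    intro P _
    simp
  rw [hL]
  simp only [Tcnt, Dcnt, Tmcnt, RTm, RT, RD, RB, Finset.filter_filter, hcard,
    Finset.mul_sum, ← Finset.sum_add_distrib]
  refine Finset.sum_congr rfl fun π _ => ?_
  by_cases hπ : IsSimsun π
  · simp only [Fintype.sum_bool, isEvenSigned_ins, hneg]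
    by_cases he : IsEvenSigned π
    · have := count_neg π hπ k
      simp only [he, hπ, true_and, not_true, false_and, and_false, if_false, true_iff,
        Bool.true_eq_false, not_false_eq_true, add_zero]
      rw [this]
      split_ifs <;> push_cast <;> ring
    · have := count_pos π hπ k
      simp only [he, hπ, true_and, false_and, if_false, false_iff, Bool.true_eq_false,
        not_false_eq_true, not_true, zero_add, and_false]
      rw [this]
      split_ifs <;> first | (exfalso; tauto) | (push_cast; ring)
  · simp [isSimsun_ins, hπ]
end

section
/- For every integer n ≥ 0, D_n(x) − T_n(x) = Σ_{k=0}^{⌊(n+1)/2⌋} (−1)^k · C(n−k+1, k) · x^k as polynomials, where C denotes the binomial coefficient. (Equivalently, D_n(x) − T_n(x) = x^{(n+1)/2}·U_{n+1}(1/(2√x)) for x > 0, where U_m is the m-th Chebyshev polynomial of the second kind.) -/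
/-!
Write `S n = D n - T n`, the sum of `ε(π) x^{des_B π}` over signed simsun permutations of rank
`n`, where `ε(π)` is the parity sign of the number of negative entries, and let `S⁺ n` be the
part of this sum with `π(1) > 0` (or `n = 0`). A simsun permutation of rank `n + 1` arises
uniquely by inserting `n + 1` or `-(n + 1)` into one of rank `n` without creating a double descent.
For a fixed word of rank `n`, summing the signed weights over all insertions telescopes:
an insertion into a descent contributes with both signs and cancels, and what is left is

* `S (n + 1) = S n - x S⁺ n`,
* `S⁺ (n + 1) = S n`.

Hence `S (n + 2) = S (n + 1) - x S n` with `S 0 = 1`, `S 1 = 1 - x`, which is also the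
recurrence of the binomial sum.

Words are handled as lists without the leading `0`. The telescoping is `ins_sum`, an induction on
the list that proves both identities at once, with `0` replaced by an arbitrary first letter. The
list `words n` of all words of rank `n` is generated by insertions, and `sum_signedPerm` identifies
sums over `SignedPerm n` with sums over `words n`, by injectivity and a cardinality count.
-/

open Finset

open Polynomial in
/-- The descent polynomial `R_n(x) = Σ_{π ∈ RB_n} x^{des_B(π)}`. -/
noncomputable def Rpoly (n : ℕ) : ℚ[X] := ∑ π ∈ RB n, X ^ desB π
open Polynomial in
noncomputable def Rppoly (n : ℕ) : ℚ[X] := ∑ π ∈ RBp n, X ^ desB π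
open Polynomial in
noncomputable def Rmpoly (n : ℕ) : ℚ[X] := ∑ π ∈ RBm n, X ^ desB π
open Polynomial in
noncomputable def Dpoly (n : ℕ) : ℚ[X] := ∑ π ∈ RD n, X ^ desB π
open Polynomial in
noncomputable def Tpoly (n : ℕ) : ℚ[X] := ∑ π ∈ RT n, X ^ desB π
open Polynomial in
noncomputable def Dppoly (n : ℕ) : ℚ[X] := ∑ π ∈ RDp n, X ^ desB π
open Polynomial in
noncomputable def Dmpoly (n : ℕ) : ℚ[X] := ∑ π ∈ RDm n, X ^ desB π
open Polynomial in
noncomputable def Tppoly (n : ℕ) : ℚ[X] := ∑ π ∈ RTp n, X ^ desB π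
open Polynomial in
noncomputable def Tmpoly (n : ℕ) : ℚ[X] := ∑ π ∈ RTm n, X ^ desB π

namespace SignedSimsun

open Polynomial

/-! ### Signed weights of words -/

/-- The sign of a letter: `-1` for negative letters and `1` otherwise. -/
noncomputable def sg (a : ℤ) : ℚ[X] := if a < 0 then -1 else 1

/-- The word `a :: l` does not start with a descent. -/
def asc (a : ℤ) : List ℤ → Prop
  | [] => True
  | b :: _ => ¬ b < a

open Classical in
/-- The signed weight of the nonempty word `a :: l`: zero if it has a double descent, and otherwise
the product of the signs of its letters times `X` to the number of descents (see `wt_eq`). -/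
noncomputable def wt : ℤ → List ℤ → ℚ[X]
  | a, [] => sg a
  | a, b :: l => sg a * (if b < a then X * (if asc b l then wt b l else 0) else wt b l)

/-- The number of descents of a word. -/
def des : List ℤ → ℕ
  | a :: b :: l => (if b < a then 1 else 0) + des (b :: l)
  | _ => 0

theorem wt_eq (a : ℤ) (l : List ℤ) :
    wt a l = if noDD (a :: l) = true then ((a :: l).map sg).prod * X ^ des (a :: l) else 0 := by
  induction l generalizing a with
  | nil => simp [wt, noDD, des]
  | cons b l ih =>
    rw [wt, ih b]
    cases l with
    | nil => by_cases h : b < a <;> simp [noDD, des, asc, h, mul_comm, mul_assoc]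
    | cons c r =>
      by_cases h : b < a <;> by_cases h2 : c < b <;>
        by_cases h3 : noDD (b :: c :: r) = true <;> simp [noDD, des, asc, h, h2, h3] <;> ring

/-! ### Insertions of a new letter of largest absolute value -/

/-- All the words obtained by inserting `N` or `-N` into a word. -/
def ins (N : ℤ) : List ℤ → List (List ℤ)
  | [] => [[N], [-N]]
  | a :: t => (N :: a :: t) :: (-N :: a :: t) :: (ins N t).map (a :: ·)

open Classical in
/-- The two telescoping identities: the total weight of all insertions of `±N` after the first
letter, and the weight of those insertions that produce an initial ascent. -/
theorem ins_sum (N : ℤ) (t : List ℤ) : ∀ a : ℤ, (∀ x ∈ a :: t, -N < x ∧ x < N) →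
    ((ins N t).map (fun l => wt a l)).sum = wt a t * (1 - if asc a t then X else 0) ∧
    ((ins N t).map (fun l => if asc a l then wt a l else 0)).sum = wt a t := by
  induction t with
  | nil =>
    intro a h
    have h1 := h a (by simp)
    have h2 : ¬ N < a := by omega
    have h3 : ¬ N < 0 := by omega
    have h4 : 0 < N := by omega
    have h5 : ¬ a ≤ -N := by omega
    have h6 : a ≤ N := by omega
    have hN : sg N = 1 := by simp [sg, h3]
    have hN' : sg (-N) = -1 := by simp [sg, h4]
    simp [ins, wt, asc, h1, h2, h5, h6, hN, hN']
    ring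
  | cons b t ih =>
    intro a h
    obtain ⟨i1, i2⟩ := ih b (fun x hx => h x (List.mem_cons_of_mem _ hx))
    have h1 := h a (by simp)
    have hb := h b (by simp)
    have h2 : ¬ N < a := by omega
    have h3 : ¬ N < 0 := by omega
    have h4 : 0 < N := by omega
    have h5 : ¬ b < -N := by omega
    have hN : sg N = 1 := by simp [sg, h3]
    have hN' : sg (-N) = -1 := by simp [sg, h4]
    have hasc : ∀ (c d : ℤ) (r : List ℤ), asc c (d :: r) = ¬ d < c := fun _ _ _ => rfl
    by_cases hba : b < a
    · simp only [ins, List.map_cons, List.map_map, Function.comp_def, List.sum_cons, wt, hasc,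
        h1, hb, h2, h5, hba, hN, hN', if_true, if_false, not_true, not_false_iff,
        List.sum_map_mul_left, i2, List.map_const', List.sum_replicate]
      constructor
      · split_ifs <;> ring
      · split_ifs <;> simp
    · simp only [ins, List.map_cons, List.map_map, Function.comp_def, List.sum_cons, wt, hasc,
        h1, hb, h2, h5, hba, hN, hN', if_true, if_false, not_true, not_false_iff,
        List.sum_map_mul_left, i1]
      constructor
      · split_ifs <;> ring
      · split_ifs <;> ring

/-- The words of all signed permutations of rank `n`, without the leading `0`. -/
def words : ℕ → List (List ℤ)
  | 0 => [[]]
  | n + 1 => (words n).flatMap (ins ((n + 1 : ℕ) : ℤ))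

theorem length_ins (N : ℤ) (l : List ℤ) : (ins N l).length = 2 * (l.length + 1) := by
  induction l with
  | nil => simp [ins]
  | cons a t ih => simp [ins, ih]; ring

theorem mem_ins {N : ℤ} {l l' : List ℤ} (h : l' ∈ ins N l) :
    ∃ l₁ l₂ a, l = l₁ ++ l₂ ∧ l' = l₁ ++ a :: l₂ ∧ (a = N ∨ a = -N) := by
  induction l generalizing l' with
  | nil =>
    simp only [ins, List.mem_cons, List.not_mem_nil, or_false] at h
    rcases h with rfl | rfl
    · exact ⟨[], [], N, by simp⟩
    · exact ⟨[], [], -N, by simp⟩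
  | cons b t ih =>
    simp only [ins, List.mem_cons, List.mem_map] at h
    rcases h with rfl | rfl | ⟨m, hm, rfl⟩
    · exact ⟨[], b :: t, N, by simp⟩
    · exact ⟨[], b :: t, -N, by simp⟩
    · obtain ⟨l₁, l₂, a, rfl, rfl, ha⟩ := ih hm
      exact ⟨b :: l₁, l₂, a, by simp, by simp, ha⟩

theorem mem_ins_of {N a : ℤ} (ha : a = N ∨ a = -N) (l₁ l₂ : List ℤ) :
    l₁ ++ a :: l₂ ∈ ins N (l₁ ++ l₂) := by
  induction l₁ with
  | nil => cases l₂ <;> rcases ha with rfl | rfl <;> simp [ins]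
  | cons b t ih => simp [ins, ih]

theorem length_of_mem_words {n : ℕ} {l : List ℤ} (h : l ∈ words n) : l.length = n := by
  induction n generalizing l with
  | zero => simp_all [words]
  | succ n ih =>
    simp only [words, List.mem_flatMap] at h
    obtain ⟨m, hm, hl⟩ := h
    obtain ⟨l₁, l₂, a, rfl, rfl, -⟩ := mem_ins hl
    have := ih hm
    simp at this ⊢
    omega

theorem natAbs_of_mem_words {n : ℕ} {l : List ℤ} (h : l ∈ words n) :
    ∀ x ∈ l, x.natAbs ≤ n := by
  induction n generalizing l with
  | zero => simp_all [words]
  | succ n ih =>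
    simp only [words, List.mem_flatMap] at h
    obtain ⟨m, hm, hl⟩ := h
    obtain ⟨l₁, l₂, a, rfl, rfl, ha⟩ := mem_ins hl
    intro x hx
    have := ih hm x
    simp only [List.mem_append, List.mem_cons] at hx this
    rcases hx with hx | rfl | hx
    · have := this (Or.inl hx); omega
    · omega
    · have := this (Or.inr hx); omega

theorem length_words (n : ℕ) : (words n).length = 2 ^ n * n.factorial := by
  induction n with
  | zero => simp [words]
  | succ n ih =>
    have : (words n).map (fun l => (ins ((n + 1 : ℕ) : ℤ) l).length)
        = (words n).map (fun _ => 2 * (n + 1)) := by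
      apply List.map_congr_left
      intro l hl
      rw [length_ins, length_of_mem_words hl]
    rw [words, List.length_flatMap, this]
    simp [ih, Nat.factorial_succ]
    ring

theorem mem_words {n : ℕ} {l : List ℤ} (h1 : l.length = n) (h2 : (l.map Int.natAbs).Nodup)
    (h3 : ∀ x ∈ l, 1 ≤ x.natAbs ∧ x.natAbs ≤ n) : l ∈ words n := by
  induction n generalizing l with
  | zero => simp_all [words]
  | succ n ih =>
    have hsub : (l.map Int.natAbs).toFinset ⊆ Finset.Icc 1 (n + 1) := by
      intro x hx
      simp only [List.mem_toFinset, List.mem_map] at hx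
      obtain ⟨y, hy, rfl⟩ := hx
      simpa using h3 y hy
    have heq := Finset.eq_of_subset_of_card_le hsub (by
      rw [List.toFinset_card_of_nodup h2]; simp [h1])
    have hmem : n + 1 ∈ (l.map Int.natAbs).toFinset := by rw [heq]; simp
    simp only [List.mem_toFinset, List.mem_map] at hmem
    obtain ⟨a, ha, han⟩ := hmem
    obtain ⟨l₁, l₂, rfl⟩ := List.append_of_mem ha
    rw [words, List.mem_flatMap]
    refine ⟨l₁ ++ l₂, ih ?_ ?_ ?_, mem_ins_of (by omega) _ _⟩
    · simp at h1 ⊢; omega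
    · simp only [List.map_append, List.map_cons] at h2 ⊢
      exact (List.nodup_middle.1 h2).of_cons
    · intro x hx
      have hx' : x ∈ l₁ ++ a :: l₂ := by
        simp only [List.mem_append, List.mem_cons] at hx ⊢; tauto
      have h4 := h3 x hx'
      have hne : x.natAbs ≠ n + 1 := by
        intro hxn
        simp only [List.map_append, List.map_cons] at h2
        have h5 := (List.nodup_cons.1 (List.nodup_middle.1 h2)).1
        apply h5
        rw [← List.map_append, han, ← hxn]
        exact List.mem_map_of_mem hx
      omega

/-! ### From signed permutations to words -/

theorem natAbs_entry {n : ℕ} (π : SignedPerm n) (j : Fin n) :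
    (entry π j).natAbs = (π.1 j : ℕ) + 1 := by
  unfold entry
  split_ifs <;> omega

theorem entry_neg_iff {n : ℕ} (π : SignedPerm n) (j : Fin n) :
    entry π j < 0 ↔ π.2 j = true := by
  unfold entry
  split_ifs with h <;> simp only [h] <;> simp <;> omega

theorem entry_injective {n : ℕ} : Function.Injective (fun π : SignedPerm n =>
    List.ofFn (entry π)) := by
  intro π ρ h
  have h' := List.ofFn_injective h
  have hj : ∀ j, entry π j = entry ρ j := fun j => congrFun h' j
  refine Prod.ext (Equiv.ext fun j => Fin.ext ?_) (funext fun j => ?_)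
  · have := natAbs_entry π j
    rw [hj j, natAbs_entry] at this
    omega
  · rw [Bool.eq_iff_iff, ← entry_neg_iff, ← entry_neg_iff, hj j]

theorem ofFn_mem_words {n : ℕ} (π : SignedPerm n) : List.ofFn (entry π) ∈ words n := by
  apply mem_words
  · simp
  · rw [List.map_ofFn, List.nodup_ofFn]
    intro i j hij
    simp only [Function.comp_def, natAbs_entry] at hij
    exact π.1.injective (Fin.ext (by omega))
  · intro x hx
    obtain ⟨j, rfl⟩ := (List.mem_ofFn' _ _).1 hx
    rw [natAbs_entry]
    omega

/-- Summing over signed permutations amounts to summing over `words n`. That `words n` has no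
repetition and contains nothing else follows from its length, `2 ^ n * n !`. -/
theorem sum_signedPerm (n : ℕ) (f : List ℤ → ℚ[X]) :
    ∑ π : SignedPerm n, f (List.ofFn (entry π)) = ((words n).map f).sum := by
  have hnd : ((Finset.univ : Finset (SignedPerm n)).val.map
      (fun π => List.ofFn (entry π))).Nodup :=
    Finset.univ.nodup.map entry_injective
  have hle : (Finset.univ : Finset (SignedPerm n)).val.map (fun π => List.ofFn (entry π))
      ≤ (words n : Multiset (List ℤ)) := by
    rw [Multiset.le_iff_subset hnd]
    intro l hl
    obtain ⟨π, -, rfl⟩ := Multiset.mem_map.1 hl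
    exact ofFn_mem_words π
  have heq := Multiset.eq_of_le_of_card_le hle (by
    simp [length_words, Fintype.card_perm, mul_comm])
  calc _ = (((Finset.univ : Finset (SignedPerm n)).val.map
        (fun π => List.ofFn (entry π))).map f).sum := by
        rw [Multiset.map_map]; rfl
    _ = _ := by rw [heq]; simp

theorem des_eq_sum (a : ℤ) (l : List ℤ) : des (a :: l) = ∑ i ∈ Finset.range l.length,
    if (a :: l).getD (i + 1) 0 < (a :: l).getD i 0 then 1 else 0 := by
  induction l generalizing a with
  | nil => simp [des]
  | cons b l ih =>
    rw [des, ih b, List.length_cons, Finset.sum_range_succ', add_comm]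
    simp

theorem wordFn_eq {n : ℕ} (π : SignedPerm n) (i : ℕ) :
    wordFn π i = (word π).getD i 0 := by
  unfold wordFn word
  rcases i with _ | i
  · simp
  · by_cases h : i < n
    · have : i + 1 ≤ n := h
      simp [this]
    · have : ¬ i + 1 ≤ n := h
      simp [this]

theorem desB_eq {n : ℕ} (π : SignedPerm n) : desB π = des (word π) := by
  rw [desB, Finset.card_filter, word, des_eq_sum]
  simp only [wordFn_eq, word, List.length_ofFn]

theorem sign_eq {n : ℕ} (π : SignedPerm n) :
    ((word π).map sg).prod = if IsEvenSigned π then 1 else -1 := by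
  have h : ((word π).map sg).prod =
      (-1) ^ (Finset.univ.filter (fun j => π.2 j = true)).card := by
    rw [word, List.map_cons, List.prod_cons, List.map_ofFn, List.prod_ofFn,
      ← Finset.prod_const, Finset.prod_filter]
    simp [sg, entry_neg_iff]
  rw [h]
  by_cases h2 : IsEvenSigned π
  · rw [if_pos h2, Even.neg_one_pow (Nat.even_iff.2 h2)]
  · rw [if_neg h2, Odd.neg_one_pow (Nat.odd_iff.2 (Nat.mod_two_ne_zero.1 h2))]

/-! ### The recurrence -/

/-- The simsun condition of rank `n` for a word `l` written without its leading `0`. -/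
def Sims (n : ℕ) (l : List ℤ) : Prop :=
  ∀ m ≤ n, noDD ((0 :: l).filter (fun a => a.natAbs ≤ m)) = true

open Classical in
/-- The sum of the signed weights of all simsun words of rank `n`. -/
noncomputable def S (n : ℕ) : ℚ[X] :=
  ((words n).map (fun l => if Sims n l then wt 0 l else 0)).sum

open Classical in
/-- The part of `S n` coming from the words that do not start with a negative letter. -/
noncomputable def Sp (n : ℕ) : ℚ[X] :=
  ((words n).map (fun l => if Sims n l then (if asc 0 l then wt 0 l else 0) else 0)).sum

theorem D_sub_T (n : ℕ) : Dpoly n - Tpoly n = S n := by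
  classical
  rw [S, ← sum_signedPerm, Dpoly, Tpoly, RD, RT, RB, Finset.sum_filter, Finset.sum_filter,
    Finset.sum_filter, Finset.sum_filter, ← Finset.sum_sub_distrib]
  refine Finset.sum_congr rfl fun π _ => ?_
  have hs : IsSimsun π ↔ Sims n (List.ofFn (entry π)) := Iff.rfl
  by_cases h : Sims n (List.ofFn (entry π))
  · have hdd : noDD (0 :: List.ofFn (entry π)) = true := by
      have := h n le_rfl
      rwa [List.filter_eq_self.2] at this
      intro x hx
      rcases List.mem_cons.1 hx with rfl | hx
      · simp
      · simpa using natAbs_of_mem_words (ofFn_mem_words π) x hx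
    have hw := sign_eq π
    rw [if_pos (hs.2 h), if_pos (hs.2 h), if_pos h, wt_eq, if_pos hdd, desB_eq]
    rw [word] at hw ⊢
    rw [hw]
    by_cases he : IsEvenSigned π <;> simp [he]
  · have h' : ¬ IsSimsun π := fun h' => h (hs.1 h')
    simp [h, h']

theorem sims_ins {n : ℕ} {l l' : List ℤ} (hl : l ∈ words n)
    (hl' : l' ∈ ins ((n + 1 : ℕ) : ℤ) l) :
    Sims (n + 1) l' ↔ Sims n l ∧ noDD (0 :: l') = true := by
  have hw : l' ∈ words (n + 1) := List.mem_flatMap.2 ⟨l, hl, hl'⟩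
  have hfull : (0 :: l').filter (fun a => a.natAbs ≤ n + 1) = 0 :: l' := by
    rw [List.filter_eq_self]
    intro x hx
    rcases List.mem_cons.1 hx with rfl | hx
    · simp
    · simpa using natAbs_of_mem_words hw x hx
  have hfil : ∀ m ≤ n, (0 :: l').filter (fun a => a.natAbs ≤ m)
      = (0 :: l).filter (fun a => a.natAbs ≤ m) := by
    intro m hm
    obtain ⟨l₁, l₂, a, rfl, rfl, ha⟩ := mem_ins hl'
    have : ¬ a.natAbs ≤ m := by omega
    simp [this]
  constructor
  · intro h
    exact ⟨fun m hm => hfil m hm ▸ h m (by omega), hfull ▸ h (n + 1) le_rfl⟩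
  · rintro ⟨h, h'⟩ m hm
    rcases Nat.le_succ_iff.1 hm with hm | rfl
    · rw [hfil m hm]; exact h m hm
    · rw [hfull]; exact h'

theorem sum_flatMap_words (n : ℕ) (f g : List ℤ → ℚ[X])
    (h : ∀ l ∈ words n, ((ins ((n + 1 : ℕ) : ℤ) l).map f).sum = g l) :
    ((words (n + 1)).map f).sum = ((words n).map g).sum := by
  rw [words]
  generalize words n = w at h
  induction w with
  | nil => simp
  | cons l w ih =>
    simp only [List.flatMap_cons, List.map_append, List.sum_append, List.map_cons, List.sum_cons]
    rw [h l (by simp), ih (fun m hm => h m (List.mem_cons_of_mem _ hm))]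

theorem sum_map_sub_words (w : List (List ℤ)) (f g : List ℤ → ℚ[X]) :
    (w.map (fun l => f l - g l)).sum = (w.map f).sum - (w.map g).sum := by
  induction w with
  | nil => simp
  | cons l w ih =>
    simp only [List.map_cons, List.sum_cons, ih]
    ring

theorem bound {n : ℕ} {l : List ℤ} (hl : l ∈ words n) :
    ∀ x ∈ 0 :: l, -((n + 1 : ℕ) : ℤ) < x ∧ x < ((n + 1 : ℕ) : ℤ) := by
  intro x hx
  rcases List.mem_cons.1 hx with rfl | hx
  · omega
  · have := natAbs_of_mem_words hl x hx
    omega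

theorem wt_eq_zero {a : ℤ} {l : List ℤ} (h : ¬ noDD (a :: l) = true) : wt a l = 0 := by
  rw [wt_eq, if_neg h]

theorem S_succ (n : ℕ) : S (n + 1) = S n - X * Sp n := by
  classical
  rw [S, S, Sp, ← List.sum_map_mul_left, ← sum_map_sub_words]
  apply sum_flatMap_words
  intro l hl
  rw [List.map_congr_left (g := fun l' => if Sims n l then wt 0 l' else 0)]
  · split_ifs with h1 h2
    · rw [(ins_sum _ l 0 (bound hl)).1, if_pos h2]; ring
    · rw [(ins_sum _ l 0 (bound hl)).1, if_neg h2]; ring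
    · simp
  · intro l' hl'
    simp only [sims_ins hl hl']
    by_cases h : noDD (0 :: l') = true
    · simp [h]
    · simp [h, wt_eq_zero h]

theorem Sp_succ (n : ℕ) : Sp (n + 1) = S n := by
  classical
  rw [S, Sp]
  apply sum_flatMap_words
  intro l hl
  rw [List.map_congr_left
    (g := fun l' => if Sims n l then (if asc 0 l' then wt 0 l' else 0) else 0)]
  · split_ifs with h1
    · exact (ins_sum _ l 0 (bound hl)).2
    · simp
  · intro l' hl'
    simp only [sims_ins hl hl']
    by_cases h : noDD (0 :: l') = true
    · simp [h]
    · simp [h, wt_eq_zero h]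

theorem S_zero : S 0 = 1 := by
  simp [S, words, Sims, noDD, wt, sg]

theorem Sp_zero : Sp 0 = 1 := by
  simp [Sp, words, Sims, noDD, wt, sg, asc]

/-! ### The binomial sum -/

/-- The binomial sum, over a range enlarged by vanishing terms. -/
noncomputable def U (n : ℕ) : ℚ[X] :=
  ∑ k ∈ Finset.range (n + 2), C ((-1 : ℚ) ^ k * ((n + 1 - k).choose k : ℚ)) * X ^ k

theorem U_eq (n : ℕ) : ∑ k ∈ Finset.range ((n + 1) / 2 + 1),
    C ((-1 : ℚ) ^ k * ((n + 1 - k).choose k : ℚ)) * X ^ k = U n := by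
  apply Finset.sum_subset
  · intro k; simp only [Finset.mem_range]; omega
  · intro k _ hk
    simp only [Finset.mem_range] at hk
    rw [Nat.choose_eq_zero_of_lt (by omega)]
    simp

theorem U_succ_succ (n : ℕ) : U (n + 2) = U (n + 1) - X * U n := by
  have h1 : U (n + 1) = ∑ k ∈ Finset.range (n + 4),
      C ((-1 : ℚ) ^ k * ((n + 2 - k).choose k : ℚ)) * X ^ k := by
    rw [Finset.sum_range_succ, U, Nat.choose_eq_zero_of_lt (by omega)]
    simp
  have h2 : U n = ∑ k ∈ Finset.range (n + 3),
      C ((-1 : ℚ) ^ k * ((n + 1 - k).choose k : ℚ)) * X ^ k := by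
    rw [Finset.sum_range_succ, U, Nat.choose_eq_zero_of_lt (by omega)]
    simp
  rw [h1, h2, U, Finset.sum_range_succ', Finset.sum_range_succ' _ (n + 3), Finset.mul_sum,
    add_sub_right_comm, ← Finset.sum_sub_distrib]
  congr 1
  · refine Finset.sum_congr rfl fun k hk => ?_
    have hk' : k < n + 3 := Finset.mem_range.1 hk
    -- Pascal's rule, which survives truncated subtraction at `k = n + 2`: all terms vanish there.
    have hp : (n + 2 + 1 - (k + 1)).choose (k + 1)
        = (n + 1 - k).choose k + (n + 2 - (k + 1)).choose (k + 1) := by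
      rcases Nat.lt_or_ge k (n + 2) with h | h
      · have e1 : n + 2 + 1 - (k + 1) = (n + 1 - k) + 1 := by omega
        have e2 : n + 2 - (k + 1) = n + 1 - k := by omega
        rw [e1, e2, Nat.choose_succ_succ]
      · rw [Nat.choose_eq_zero_of_lt (by omega), Nat.choose_eq_zero_of_lt (by omega),
          Nat.choose_eq_zero_of_lt (by omega)]
    rw [hp]
    push_cast
    simp only [map_mul, map_add, map_pow, map_neg, map_one, map_natCast]
    ring

theorem S_eq_U (n : ℕ) : S n = U n := by
  induction n using Nat.twoStepInduction with
  | zero => rw [S_zero]; simp [U, Finset.sum_range_succ]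
  | one => rw [S_succ, S_zero, Sp_zero]; simp [U, Finset.sum_range_succ]; ring
  | more n ih1 ih2 => rw [S_succ, Sp_succ, ih1, ih2, U_succ_succ]

end SignedSimsun

open Polynomial in
/-- `D_n(x) − T_n(x) = Σ_{k=0}^{⌊(n+1)/2⌋} (−1)^k C(n−k+1,k) x^k`. -/
theorem stmt15 (n : ℕ) :
    Dpoly n - Tpoly n =
      ∑ k ∈ Finset.range ((n + 1) / 2 + 1),
        C ((-1 : ℚ) ^ k * ((n + 1 - k).choose k : ℚ)) * X ^ k := by
  rw [SignedSimsun.D_sub_T, SignedSimsun.S_eq_U, SignedSimsun.U_eq]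
end
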